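/- For the n-walker random walk with local memory on G with any initial rotor configuration ρ, the recurrence probability satisfies p_rec(ρ) ∈ {0, 1}. -/

import Mathlib

/-! The walk is realized on a probability space of instructions. For every vertex `x`, exit number
`k` and current rotor `a`, let `ω (x, k, a)` be independent with law `p_x(a, ·)`; the walker making
the `k`-th exit from `x` while the rotor is `a` moves to `ω (x, k, a)`. Since no entry is read
twice, the resulting trajectory has the law of the walk (`isLaw_map`), and that law is unique
(`isLaw_unique`). Following the rotors at `x` gives a stack of instructions at `x`, and almost
surely every stack points only to neighbors and to each of them infinitely often (`ae_good`).

The heart of the proof is deterministic (`stackRec_of_eq_off`): for such stacks, recurrence does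
not change when the whole stack at one vertex `x` is replaced. Heuristically, if the walk of the
new stacks escapes after finitely many exits from `x`, then the original stack at `x`, run long
enough, has sent at least as many walkers to each neighbor; by the abelian property the additional
walkers do not bring the escaped ones back, so no walker is left at `x`, contradicting recurrence.
The lemma makes this rigorous with a least-action argument on odometers.

Consequently recurrence agrees almost surely, for each finite set `F` of vertices, with an event
depending only on the entries outside `F`. It is therefore independent of all entries, hence of
itself, and has probability `0` or `1` (`field_zero_one`). -/

open MeasureTheory Filter
open scoped ENNReal

namespace RWLM

variable {V : Type*}

/-- The state of an `n`-walker random walk with local memory: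
the positions of the `n` walkers together with the current rotor configuration. -/
abbrev State (V : Type*) (n : ℕ) := (Fin n → V) × (V → V)

open Classical in
/-- The `m`-step transition probabilities of the local mechanism at `x`. -/
noncomputable def mechPow (mech : V → V → V → ℝ≥0∞) (x : V) : ℕ → V → V → ℝ≥0∞
  | 0, a, b => if a = b then 1 else 0
  | m + 1, a, b => ∑' c, mech x a c * mechPow mech x m c b

/-- `mech` is a family of local mechanisms for the graph `G`: `mech x a b` is the
transition probability `p_x(a, b)` of the local Markov chain at `x`. Each row is a
probability distribution supported on the neighbors of `x`, and the chain is
irreducible on the (finite) set of neighbors of `x`. -/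
structure IsMechanism (G : SimpleGraph V) (mech : V → V → V → ℝ≥0∞) : Prop where
  support : ∀ x a b, mech x a b ≠ 0 → G.Adj x b
  total : ∀ x a, ∑' b, mech x a b = 1
  irreducible : ∀ x a b, G.Adj x a → G.Adj x b → ∃ m, 0 < mechPow mech x m a b

/-- `ρ` is a rotor configuration of `G`: `ρ x` is a neighbor of `x` for every `x`. -/
def IsRotor (G : SimpleGraph V) (ρ : V → V) : Prop := ∀ x, G.Adj x (ρ x)

/-- The walker that is active at the `(t+1)`-st step of the cyclic turn order. -/
def active (n : ℕ) (hn : 0 < n) (t : ℕ) : Fin n := ⟨t % n, Nat.mod_lt t hn⟩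

open Classical in
/-- Update the state when walker `i` moves to `y`: the rotor at the vertex the walker
leaves is set to `y`, and walker `i` moves to `y`. -/
noncomputable def apply' (n : ℕ) (s : State V n) (i : Fin n) (y : V) : State V n :=
  (Function.update s.1 i y, Function.update s.2 (s.1 i) y)

/-- The one-step transition probability of the RWLM: from state `s`, the active walker
`i` samples its next location `y` from the row of the local mechanism of its current
position indexed by the current rotor there. -/
def weight (mech : V → V → V → ℝ≥0∞) (n : ℕ) (s : State V n) (i : Fin n) (y : V) :
    ℝ≥0∞ :=
  mech (s.1 i) (s.2 (s.1 i)) y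

/-- The deterministic reconstruction of the state of the `n`-walker RWLM (with initial
walker locations `x0` and initial rotor configuration `ρ`) from a trajectory. -/
noncomputable def seq (n : ℕ) (hn : 0 < n) (x0 : Fin n → V) (ρ : V → V) (y : ℕ → V) :
    ℕ → State V n
  | 0 => (x0, ρ)
  | t + 1 => apply' n (seq n hn x0 ρ y t) (active n hn t) (y t)

/-- `μ` is the law of the `n`-walker RWLM with local mechanisms `mech`, initial walker
locations `x0` and initial rotor configuration `ρ`: the finite-dimensional
distributions are products of one-step transition probabilities. -/
def IsLaw [MeasurableSpace V] (mech : V → V → V → ℝ≥0∞) (n : ℕ) (hn : 0 < n)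
    (x0 : Fin n → V) (ρ : V → V) (μ : Measure (ℕ → V)) : Prop :=
  ∀ (t : ℕ) (c : ℕ → V),
    μ {y : ℕ → V | ∀ s < t, y s = c s} =
      ∏ s ∈ Finset.range t, weight mech n (seq n hn x0 ρ c s) (active n hn s) (c s)

/-- A trajectory is recurrent if every vertex is visited infinitely many times. -/
def Recurrent (n : ℕ) (hn : 0 < n) (x0 : Fin n → V) (ρ : V → V) (y : ℕ → V) : Prop :=
  ∀ v : V, {t : ℕ | ∃ i, (seq n hn x0 ρ y t).1 i = v}.Infinite

end RWLM

/-! ### Walks driven by deterministic stacks of instructions -/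

namespace RWLM

open Classical

variable {V : Type*}

/-- The round-robin `n`-walker walk driven by stacks of instructions: the `k`-th exit from `v`
(counting from `0`) goes to `σ v k`. The state records the positions of the walkers and the
odometer, that is, the number of exits from each vertex so far. -/
noncomputable def walk (n : ℕ) (hn : 0 < n) (x0 : Fin n → V) (σ : V → ℕ → V) :
    ℕ → (Fin n → V) × (V → ℕ)
  | 0 => (x0, 0)
  | t + 1 =>
    let s := walk n hn x0 σ t
    let v := s.1 (active n hn t)
    (Function.update s.1 (active n hn t) (σ v (s.2 v)), Function.update s.2 v (s.2 v + 1))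

/-- The vertex left at step `t`. -/
noncomputable def src (n : ℕ) (hn : 0 < n) (x0 : Fin n → V) (σ : V → ℕ → V) (t : ℕ) : V :=
  (walk n hn x0 σ t).1 (active n hn t)

/-- The vertex entered at step `t`. -/
noncomputable def traj (n : ℕ) (hn : 0 < n) (x0 : Fin n → V) (σ : V → ℕ → V) (t : ℕ) : V :=
  σ (src n hn x0 σ t) ((walk n hn x0 σ t).2 (src n hn x0 σ t))

/-- The walk driven by `σ` visits every vertex infinitely often. -/
def StackRec (n : ℕ) (hn : 0 < n) (x0 : Fin n → V) (σ : V → ℕ → V) : Prop :=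
  ∀ v, {t : ℕ | ∃ i, (walk n hn x0 σ t).1 i = v}.Infinite

/-- The stack `s` at `v` points only to neighbors of `v`, and to each of them infinitely often. -/
def GoodAt (G : SimpleGraph V) (v : V) (s : ℕ → V) : Prop :=
  (∀ k, G.Adj v (s k)) ∧ ∀ w, G.Adj v w → ∀ K, ∃ k ≥ K, s k = w

section walk

variable {n : ℕ} {hn : 0 < n} {x0 : Fin n → V} {σ : V → ℕ → V}

lemma odo_succ (t : ℕ) : (walk n hn x0 σ (t + 1)).2 =
    Function.update (walk n hn x0 σ t).2 (src n hn x0 σ t)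
      ((walk n hn x0 σ t).2 (src n hn x0 σ t) + 1) := rfl

lemma pos_succ (t : ℕ) : (walk n hn x0 σ (t + 1)).1 =
    Function.update (walk n hn x0 σ t).1 (active n hn t) (traj n hn x0 σ t) := rfl

lemma odo_mono (v : V) : Monotone fun t => (walk n hn x0 σ t).2 v := by
  refine monotone_nat_of_le_succ fun t => ?_
  simp only [odo_succ, Function.update_apply]
  split_ifs with h
  · subst h; omega
  · exact le_rfl

/-- The exits from `v` are made one at a time, so each exit number `k` below the odometer value has
a step at which it is made. -/
lemma exists_exit {v : V} {k T : ℕ} (h : k < (walk n hn x0 σ T).2 v) :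
    ∃ t < T, src n hn x0 σ t = v ∧ (walk n hn x0 σ t).2 v = k := by
  induction T with
  | zero => simp [walk] at h
  | succ T ih =>
    by_cases hk : k < (walk n hn x0 σ T).2 v
    · obtain ⟨t, ht, h'⟩ := ih hk
      exact ⟨t, by omega, h'⟩
    · rw [odo_succ, Function.update_apply] at h
      split_ifs at h with hv
      · subst hv
        exact ⟨T, by omega, rfl, by omega⟩
      · omega

/-- A walker sitting at `v` eventually gets its turn, which raises the exit count of `v`. -/
lemma exists_odo_gt {t : ℕ} {i : Fin n} {v : V} (h : (walk n hn x0 σ t).1 i = v) :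
    ∃ t' ≥ t, (walk n hn x0 σ t).2 v < (walk n hn x0 σ t').2 v := by
  have hex : ∃ d, active n hn (t + d) = i := by
    refine ⟨(n - 1) * t + i, Fin.ext ?_⟩
    obtain ⟨m, rfl⟩ : ∃ m, n = m + 1 := ⟨n - 1, by omega⟩
    have : t + ((m + 1 - 1) * t + (i : ℕ)) = i + (m + 1) * t := by
      simp only [Nat.add_sub_cancel]; ring
    simp only [active, this, Nat.add_mul_mod_self_left]
    exact Nat.mod_eq_of_lt i.2
  have hstay : ∀ r ≤ Nat.find hex, (walk n hn x0 σ (t + r)).1 i = v := by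
    intro r
    induction r with
    | zero => intro _; exact h
    | succ r ih =>
      intro hr
      have hne := Nat.find_min hex (show r < Nat.find hex by omega)
      rw [← add_assoc, pos_succ, Function.update_apply, if_neg (fun h => hne h.symm)]
      exact ih (by omega)
  set d := Nat.find hex with hd
  have hs : src n hn x0 σ (t + d) = v := by
    have := hstay d le_rfl
    rwa [src, Nat.find_spec hex]
  refine ⟨t + d + 1, by omega, ?_⟩
  rw [odo_succ, hs, Function.update_self]
  have := odo_mono (n := n) (hn := hn) (x0 := x0) (σ := σ) v (show t ≤ t + d by omega)
  simp only at this
  omega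

/-- A vertex is visited infinitely often exactly when it is left infinitely often. -/
lemma infinite_visits_iff (v : V) :
    {t : ℕ | ∃ i, (walk n hn x0 σ t).1 i = v}.Infinite ↔
      ∀ K, ∃ t, K ≤ (walk n hn x0 σ t).2 v := by
  rw [Set.infinite_iff_exists_gt]
  constructor
  · intro h K
    induction K with
    | zero => exact ⟨0, Nat.zero_le _⟩
    | succ K ih =>
      obtain ⟨t, ht⟩ := ih
      obtain ⟨t', ⟨i, hi⟩, htt⟩ := h t
      obtain ⟨t'', -, h3⟩ := exists_odo_gt hi
      have := odo_mono (n := n) (hn := hn) (x0 := x0) (σ := σ) v htt.le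
      simp only at this
      exact ⟨t'', by omega⟩
  · intro h N
    obtain ⟨T, hT⟩ := h ((walk n hn x0 σ (N + 1)).2 v + 1)
    obtain ⟨t, -, hs, ho⟩ := exists_exit (show (walk n hn x0 σ (N + 1)).2 v < _ from hT)
    refine ⟨t, ⟨_, hs⟩, ?_⟩
    by_contra hlt
    have := odo_mono (n := n) (hn := hn) (x0 := x0) (σ := σ) v (show t + 1 ≤ N + 1 by omega)
    have he : (walk n hn x0 σ (t + 1)).2 v = (walk n hn x0 σ t).2 v + 1 := by
      rw [odo_succ, hs, Function.update_self]
    simp only at this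
    omega

lemma unbounded_of_adj {G : SimpleGraph V} {v w : V} (hg : GoodAt G v (σ v)) (hvw : G.Adj v w)
    (h : ∀ K, ∃ t, K ≤ (walk n hn x0 σ t).2 v) : ∀ K, ∃ t, K ≤ (walk n hn x0 σ t).2 w := by
  rw [← infinite_visits_iff, Set.infinite_iff_exists_gt]
  intro N
  obtain ⟨k, hk, hkw⟩ := hg.2 w hvw ((walk n hn x0 σ N).2 v)
  obtain ⟨T, hT⟩ := h (k + 1)
  obtain ⟨t, -, hs, ho⟩ := exists_exit hT
  refine ⟨t + 1, ⟨active n hn t, ?_⟩, ?_⟩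
  · rw [pos_succ, Function.update_self, traj, hs, ho, hkw]
  · by_contra hlt
    have := odo_mono (n := n) (hn := hn) (x0 := x0) (σ := σ) v (show t + 1 ≤ N by omega)
    simp only [odo_succ, hs, Function.update_self] at this
    omega

/-- If some vertex is left infinitely often then so are its neighbors, hence all vertices. -/
lemma bounded_of_not_stackRec {G : SimpleGraph V} (hG : G.Connected)
    (hg : ∀ v, GoodAt G v (σ v)) (h : ¬ StackRec n hn x0 σ) (v : V) :
    ∃ K, ∀ t, (walk n hn x0 σ t).2 v < K := by
  by_contra! hv
  refine h fun w => (infinite_visits_iff w).2 ?_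
  obtain ⟨p⟩ := hG.preconnected v w
  induction p with
  | nil => exact hv
  | cons hadj _ ih => exact ih (unbounded_of_adj (hg _) hadj hv)

/-- Number of walkers at `v`. -/
noncomputable def cnt {n : ℕ} (p : Fin n → V) (v : V) : ℕ := (Finset.univ.filter (p · = v)).card

/-- How many of the first `k` instructions of the stack `s` point to `v`. -/
noncomputable def uses (s : ℕ → V) (k : ℕ) (v : V) : ℕ := ((Finset.range k).filter (s · = v)).card

/-- The number of arrivals at `v` after each vertex `y` has been left `u y` times, where `N v` is
the set of neighbors of `v`. -/
noncomputable def inflow (N : V → Finset V) (σ : V → ℕ → V) (u : V → ℕ) (v : V) : ℕ :=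
  ∑ y ∈ N v, uses (σ y) (u y) v

lemma uses_mono (s : ℕ → V) (v : V) : Monotone fun k => uses s k v := fun _ _ h =>
  Finset.card_le_card (Finset.filter_subset_filter _ (Finset.range_mono h))

lemma uses_succ (s : ℕ → V) (k : ℕ) (v : V) :
    uses s (k + 1) v = uses s k v + if s k = v then 1 else 0 := by
  unfold uses
  rw [Finset.range_add_one, Finset.filter_insert]
  split_ifs with h
  · rw [Finset.card_insert_of_notMem (by simp)]
  · rfl

lemma inflow_mono (N : V → Finset V) {u w : V → ℕ} (h : u ≤ w) (v : V) :
    inflow N σ u v ≤ inflow N σ w v :=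
  Finset.sum_le_sum fun y _ => uses_mono _ _ (h y)

lemma inflow_update {G : SimpleGraph V} {N : V → Finset V} (hN : ∀ v y, y ∈ N v ↔ G.Adj v y)
    (hg : ∀ v, GoodAt G v (σ v)) (u : V → ℕ) (y v : V) :
    inflow N σ (Function.update u y (u y + 1)) v =
      inflow N σ u v + if σ y (u y) = v then 1 else 0 := by
  unfold inflow
  by_cases hy : y ∈ N v
  · have hsplit : ∀ f : V → ℕ, ∑ z ∈ N v, f z = f y + ∑ z ∈ (N v).erase y, f z :=
      fun f => (Finset.add_sum_erase _ f hy).symm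
    rw [hsplit, hsplit fun z => uses (σ z) (u z) v, Function.update_self, uses_succ,
      add_right_comm]
    congr 2
    refine Finset.sum_congr rfl fun z hz => ?_
    rw [Function.update_of_ne (Finset.ne_of_mem_erase hz)]
  · rw [if_neg, add_zero]
    · refine Finset.sum_congr rfl fun z hz => ?_
      rw [Function.update_of_ne]
      rintro rfl; exact hy hz
    · rintro rfl
      exact hy ((hN _ _).2 ((hg y).1 _).symm)

lemma cnt_update (p : Fin n → V) (i : Fin n) (y v : V) :
    (cnt (Function.update p i y) v : ℤ) =
      cnt p v + (if y = v then 1 else 0) - (if p i = v then 1 else 0) := by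
  have h : ∀ q : Fin n → V, (cnt q v : ℤ) =
      (if q i = v then 1 else 0) + ∑ j ∈ Finset.univ.erase i, if q j = v then 1 else 0 := by
    intro q
    rw [Finset.add_sum_erase Finset.univ (fun j => if q j = v then (1 : ℤ) else 0)
      (Finset.mem_univ i)]
    simp [cnt]
  have hrest : ∑ j ∈ Finset.univ.erase i, (if Function.update p i y j = v then (1 : ℤ) else 0) =
      ∑ j ∈ Finset.univ.erase i, if p j = v then 1 else 0 :=
    Finset.sum_congr rfl fun j hj => by rw [Function.update_of_ne (Finset.ne_of_mem_erase hj)]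
  rw [h, h, hrest, Function.update_self]
  ring

/-- Conservation of walkers. -/
lemma cnt_eq {G : SimpleGraph V} {N : V → Finset V} (hN : ∀ v y, y ∈ N v ↔ G.Adj v y)
    (hg : ∀ v, GoodAt G v (σ v)) (t : ℕ) (v : V) :
    (cnt (walk n hn x0 σ t).1 v : ℤ) =
      cnt x0 v + inflow N σ (walk n hn x0 σ t).2 v - (walk n hn x0 σ t).2 v := by
  induction t with
  | zero => simp [walk, inflow, uses]
  | succ t ih =>
    rw [pos_succ, cnt_update, odo_succ, inflow_update hN hg, ih, Function.update_apply]
    change _ + _ - (if src n hn x0 σ t = v then (1 : ℤ) else 0) = _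
    by_cases hs : v = src n hn x0 σ t
    · rw [if_pos hs, if_pos hs.symm, traj, ← hs]
      push_cast
      ring
    · rw [if_neg hs, if_neg (Ne.symm hs), traj]
      push_cast
      ring

/-- For a walk that is not recurrent, the limit of the odometers is finite, and eventually no walker
is left at any given vertex: everything that ever enters a vertex leaves it. -/
lemma exists_limit_odo {G : SimpleGraph V} (hG : G.Connected) {N : V → Finset V}
    (hN : ∀ v y, y ∈ N v ↔ G.Adj v y)
    (hg : ∀ v, GoodAt G v (σ v)) (h : ¬ StackRec n hn x0 σ) :
    ∃ u : V → ℕ, ∀ v, cnt x0 v + inflow N σ u v = u v := by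
  have hlim : ∀ v, ∃ L, ∀ᶠ t in atTop, (walk n hn x0 σ t).2 v = L := by
    intro v
    have hb := bounded_of_not_stackRec hG hg h v
    have h1 := Nat.find_spec hb
    obtain ⟨t, ht⟩ : ∃ t, Nat.find hb ≤ (walk n hn x0 σ t).2 v + 1 := by
      by_contra! hc
      have := h1 0
      exact Nat.find_min hb (show Nat.find hb - 1 < Nat.find hb by omega)
        (fun t => by have := hc t; omega)
    refine ⟨Nat.find hb - 1, eventually_atTop.2 ⟨t, fun s hs => ?_⟩⟩
    have h2 := odo_mono (n := n) (hn := hn) (x0 := x0) (σ := σ) v hs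
    have h3 := h1 s
    simp only at h2
    omega
  choose u hu using hlim
  refine ⟨u, fun v => ?_⟩
  have hnb : ∀ᶠ t in atTop, ∀ y ∈ N v, (walk n hn x0 σ t).2 y = u y :=
    (Finset.eventually_all _).2 fun y _ => hu y
  obtain ⟨t, ht⟩ := eventually_atTop.1 (hu v)
  obtain ⟨s, ⟨hs1, hs2⟩, hs3⟩ := ((hnb.and (hu v)).and (eventually_ge_atTop t)).exists
  have hc : cnt (walk n hn x0 σ s).1 v = 0 := by
    rw [cnt, Finset.card_eq_zero, Finset.filter_eq_empty_iff]
    intro i _ hi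
    obtain ⟨t', ht', hlt⟩ := exists_odo_gt hi
    have := ht t' (by omega)
    omega
  have := cnt_eq (n := n) (hn := hn) (x0 := x0) hN hg s v
  rw [hc, hs2] at this
  have he : inflow N σ (walk n hn x0 σ s).2 v = inflow N σ u v :=
    Finset.sum_congr rfl fun y hy => by rw [hs1 y hy]
  rw [he] at this
  omega

lemma exists_uses_ge {G : SimpleGraph V} {x v : V} {s : ℕ → V} (hs : GoodAt G x s)
    (hv : G.Adj x v) (m : ℕ) : ∃ K, m ≤ uses s K v := by
  induction m with
  | zero => exact ⟨0, Nat.zero_le _⟩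
  | succ m ih =>
    obtain ⟨K, hK⟩ := ih
    obtain ⟨k, hk, hkv⟩ := hs.2 v hv K
    refine ⟨k + 1, ?_⟩
    have := uses_mono s v hk
    simp only at this
    rw [uses_succ, if_pos hkv]
    omega

lemma sum_uses {G : SimpleGraph V} {x : V} {s : ℕ → V} (hs : GoodAt G x s) {B : Finset V}
    (hB : ∀ v, G.Adj x v → v ∈ B) (K : ℕ) : ∑ v ∈ B, uses s K v = K := by
  have := Finset.card_eq_sum_card_fiberwise (f := s) (s := Finset.range K) (t := B)
    (fun k _ => hB _ (hs.1 k))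
  rw [Finset.card_range] at this
  exact this.symm

/-! ### Recurrence is insensitive to the stack at one vertex -/

/-- Changing the stack at a single vertex `x` preserves recurrence. If the walk of `σ'` were not
recurrent, let `u'` be its limit odometer, and choose `K` so that the first `K` instructions of
`σ x` contain, with multiplicity, those of `σ' x` used by `u'`. Take the time `T` at which the walk
of `σ` is about to leave `x` after `K` earlier exits. The signed configuration `C t` obtained by
performing `max (u_t, w)` exits along `σ`, with `u_t` the odometer of the walk of `σ` and `w = u'`
off `x`, `w x = K`, has total mass zero and stays nonnegative off `x`, so `C T x ≤ 0`; but it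
dominates the actual number of walkers at `x`, which is positive at time `T`. -/
theorem stackRec_of_eq_off {G : SimpleGraph V} (hG : G.Connected) {N : V → Finset V}
    (hN : ∀ v y, y ∈ N v ↔ G.Adj v y) {σ σ' : V → ℕ → V}
    (hg : ∀ v, GoodAt G v (σ v)) (hg' : ∀ v, GoodAt G v (σ' v)) (x : V)
    (heq : ∀ v, v ≠ x → σ v = σ' v) (hrec : StackRec n hn x0 σ) : StackRec n hn x0 σ' := by
  by_contra hnot
  obtain ⟨u', hu'⟩ := exists_limit_odo hG hN hg' hnot
  obtain ⟨K, hK⟩ : ∃ K, ∀ v, uses (σ' x) (u' x) v ≤ uses (σ x) K v := by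
    have h1 : ∀ v, ∃ K, G.Adj x v → uses (σ' x) (u' x) v ≤ uses (σ x) K v := by
      intro v
      by_cases hv : G.Adj x v
      · obtain ⟨K, hK⟩ := exists_uses_ge (hg x) hv (uses (σ' x) (u' x) v)
        exact ⟨K, fun _ => hK⟩
      · exact ⟨0, fun h => absurd h hv⟩
    choose Kf hKf using h1
    refine ⟨(N x).sup Kf, fun v => ?_⟩
    by_cases hv : G.Adj x v
    · exact (hKf v hv).trans (uses_mono _ _ (Finset.le_sup (f := Kf) ((hN x v).2 hv)))
    · have : uses (σ' x) (u' x) v = 0 := by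
        rw [uses, Finset.card_eq_zero, Finset.filter_eq_empty_iff]
        rintro k - rfl
        exact hv ((hg' x).1 k)
      omega
  obtain ⟨T', hT'⟩ := (infinite_visits_iff x).1 (hrec x) (K + 1)
  obtain ⟨T, -, hTs, hTo⟩ := exists_exit hT'
  set w : V → ℕ := Function.update u' x K with hw
  set W : ℕ → V → ℕ := fun t => (walk n hn x0 σ t).2 ⊔ w with hW
  set C : ℕ → V → ℤ := fun t v => cnt x0 v + inflow N σ (W t) v - W t v with hC
  -- More exits elsewhere can only increase the number of arrivals.
  have hCge : ∀ t v, w v ≤ (walk n hn x0 σ t).2 v →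
      (cnt (walk n hn x0 σ t).1 v : ℤ) ≤ C t v := by
    intro t v h
    have h1 : W t v = (walk n hn x0 σ t).2 v := sup_eq_left.2 h
    have h2 := inflow_mono (σ := σ) N (show (walk n hn x0 σ t).2 ≤ W t from le_sup_left) v
    rw [cnt_eq hN hg t v]
    simp only [hC, h1]
    omega
  -- A step either lies below `w`, and changes nothing, or moves one unit of mass of `C`.
  have hstep : ∀ t, C (t + 1) = C t ∨ (w (src n hn x0 σ t) ≤
      (walk n hn x0 σ t).2 (src n hn x0 σ t) ∧ ∀ v, C (t + 1) v = C t v +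
        (if traj n hn x0 σ t = v then 1 else 0) - (if src n hn x0 σ t = v then 1 else 0)) := by
    intro t
    set s := src n hn x0 σ t with hs
    by_cases h : w s ≤ (walk n hn x0 σ t).2 s
    · right
      refine ⟨h, fun v => ?_⟩
      have h1 : W t s = (walk n hn x0 σ t).2 s := sup_eq_left.2 h
      have h2 : W (t + 1) = Function.update (W t) s (W t s + 1) := by
        funext v
        simp only [hW, odo_succ, ← hs, Pi.sup_apply, Function.update_apply]
        split_ifs with hv
        · subst hv
          rw [sup_eq_left.2 h, sup_eq_left]; omega
        · rfl
      simp only [hC]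
      rw [h2, inflow_update hN hg, h1, traj, ← hs, Function.update_apply]
      simp only [eq_comm (a := v)]
      push_cast
      split_ifs <;> simp_all <;> ring
    · left
      have h2 : W (t + 1) = W t := by
        funext v
        simp only [hW, odo_succ, ← hs, Pi.sup_apply, Function.update_apply]
        split_ifs with hv
        · subst hv
          rw [sup_eq_right.2, sup_eq_right.2] <;> omega
        · rfl
      simp only [hC, h2]
  have hin : ∀ v, (inflow N σ w v : ℤ) - inflow N σ' u' v =
      uses (σ x) K v - uses (σ' x) (u' x) v := by
    intro v
    have hterm : ∀ y, (uses (σ y) (w y) v : ℤ) - uses (σ' y) (u' y) v =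
        if y = x then (uses (σ x) K v : ℤ) - uses (σ' x) (u' x) v else 0 := by
      intro y
      split_ifs with hy
      · subst hy; simp [hw]
      · rw [hw, Function.update_of_ne hy, heq y hy, sub_self]
    unfold inflow
    push_cast
    rw [← Finset.sum_sub_distrib, Finset.sum_congr rfl fun y _ => hterm y, Finset.sum_ite_eq']
    split_ifs with hx
    · rfl
    · have hz : ∀ τ : V → ℕ → V, GoodAt G x (τ x) → ∀ k, uses (τ x) k v = 0 := by
        intro τ hτ k
        rw [uses, Finset.card_eq_zero, Finset.filter_eq_empty_iff]
        rintro j - rfl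
        exact hx ((hN _ _).2 (hτ.1 j).symm)
      rw [hz σ (hg x), hz σ' (hg' x)]; rfl
  -- `u'` balances arrivals and departures under `σ'`; only the extra exits from `x` remain.
  have hC0 : ∀ v, C 0 v = (uses (σ x) K v : ℤ) - uses (σ' x) (u' x) v +
      if v = x then (u' x : ℤ) - K else 0 := by
    intro v
    have hW0 : W 0 = w := by
      funext v; simp [hW, walk]
    have h1 := hin v
    have h2 := hu' v
    simp only [hC, hW0]
    split_ifs with hv
    · subst hv
      simp only [hw, Function.update_self] at h1 ⊢
      omega
    · have : w v = u' v := by rw [hw, Function.update_of_ne hv]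
      omega
  -- Mass is moved only out of vertices where a walker sits, and there `C` is at least `1`.
  have hpos : ∀ t v, v ≠ x → 0 ≤ C t v := by
    intro t
    induction t with
    | zero =>
      intro v hv
      rw [hC0, if_neg hv]
      have := hK v
      omega
    | succ t ih =>
      intro v hv
      rcases hstep t with h | ⟨h, h'⟩
      · rw [h]; exact ih v hv
      · rw [h' v]
        have h0 := ih v hv
        by_cases hs : src n hn x0 σ t = v
        · have h1 : 1 ≤ cnt (walk n hn x0 σ t).1 v :=
            Finset.card_pos.2 ⟨active n hn t, by simpa [src] using hs⟩
          have h2 := hCge t v (hs ▸ h)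
          split_ifs <;> omega
        · split_ifs <;> omega
  -- A finite set of vertices containing the support of all `C t` with `t ≤ T`.
  set B : Finset V := insert x (N x) ∪ ((Finset.range T).image (src n hn x0 σ) ∪
    (Finset.range T).image (traj n hn x0 σ)) with hB
  have hBx : ∀ v, G.Adj x v → v ∈ B := fun v hv => by simp [hB, (hN x v).2 hv]
  have hxB : x ∈ B := by simp [hB]
  have hsum : ∀ t ≤ T, ∑ v ∈ B, C t v = 0 := by
    intro t
    induction t with
    | zero =>
      intro _
      have h1 := sum_uses (hg x) hBx K
      have h2 := sum_uses (hg' x) hBx (u' x)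
      simp only [hC0]
      rw [Finset.sum_add_distrib, Finset.sum_sub_distrib, Finset.sum_ite_eq', if_pos hxB]
      zify at h1 h2
      rw [h1, h2]; ring
    | succ t ih =>
      intro ht
      rcases hstep t with h | ⟨-, h⟩
      · rw [h]; exact ih (by omega)
      · have h1 : src n hn x0 σ t ∈ B := by
          refine Finset.mem_union_right _ (Finset.mem_union_left _ (Finset.mem_image_of_mem _ ?_))
          simp; omega
        have h2 : traj n hn x0 σ t ∈ B := by
          refine Finset.mem_union_right _ (Finset.mem_union_right _ (Finset.mem_image_of_mem _ ?_))
          simp; omega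
        simp only [h]
        rw [Finset.sum_sub_distrib, Finset.sum_add_distrib, Finset.sum_ite_eq, Finset.sum_ite_eq,
          if_pos h1, if_pos h2, ih (by omega)]
        ring
  have h1 := hsum T le_rfl
  rw [← Finset.add_sum_erase _ _ hxB] at h1
  have h2 : 0 ≤ ∑ v ∈ B.erase x, C T v :=
    Finset.sum_nonneg fun v hv => hpos T v (Finset.ne_of_mem_erase hv)
  have h3 : 1 ≤ cnt (walk n hn x0 σ T).1 x :=
    Finset.card_pos.2 ⟨active n hn T, by simpa [src] using hTs⟩
  have h4 := hCge T x (by simp [hw, hTo])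
  omega

theorem stackRec_piecewise {G : SimpleGraph V} (hG : G.Connected) {N : V → Finset V}
    (hN : ∀ v y, y ∈ N v ↔ G.Adj v y) {σ σ' : V → ℕ → V}
    (hg : ∀ v, GoodAt G v (σ v)) (hg' : ∀ v, GoodAt G v (σ' v)) (F : Finset V) :
    StackRec n hn x0 (F.piecewise σ' σ) ↔ StackRec n hn x0 σ := by
  have hgF : ∀ (F : Finset V) v, GoodAt G v (F.piecewise σ' σ v) := by
    intro F v
    by_cases hv : v ∈ F
    · rw [Finset.piecewise_eq_of_mem _ _ _ hv]; exact hg' v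
    · rw [Finset.piecewise_eq_of_notMem _ _ _ hv]; exact hg v
  induction F using Finset.induction_on with
  | empty => simp
  | insert x F hx ih =>
    refine Iff.trans ?_ ih
    have : ∀ v, v ≠ x → (insert x F).piecewise σ' σ v = F.piecewise σ' σ v := by
      intro v hv
      rw [Finset.piecewise_insert, Function.update_of_ne hv]
    exact ⟨stackRec_of_eq_off hG hN (hgF _) (hgF _) x this,
      stackRec_of_eq_off hG hN (hgF _) (hgF _) x fun v hv => (this v hv).symm⟩

end walk

end RWLM

/-! ### The stack representation of the walk and its law -/

namespace RWLM

open Classical ProbabilityTheory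

variable {V : Type*}

/-- The successive rotors at `v` read off a field `ω`: the entry `ω (v, k, a)` is the rotor that
replaces `a` when `v` is left for the `k`-th time (counting from `0`). -/
noncomputable def rot (ρ : V → V) (ω : V × ℕ × V → V) (v : V) : ℕ → V
  | 0 => ρ v
  | k + 1 => ω (v, k, rot ρ ω v k)

/-- The instruction used at the `k`-th exit from `v` is the rotor at `v` right after that exit. -/
noncomputable def instr (ρ : V → V) (ω : V × ℕ × V → V) (v : V) (k : ℕ) : V :=
  rot ρ ω v (k + 1)

/-- `exits n hn x0 ρ c t v` is the number of exits from `v` during the first `t` steps of the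
trajectory `c`. -/
noncomputable def exits (n : ℕ) (hn : 0 < n) (x0 : Fin n → V) (ρ : V → V) (c : ℕ → V) :
    ℕ → V → ℕ
  | 0 => 0
  | t + 1 =>
    let v := (seq n hn x0 ρ c t).1 (active n hn t)
    Function.update (exits n hn x0 ρ c t) v (exits n hn x0 ρ c t v + 1)

/-- The index of the field entry that is read at step `t` along the trajectory `c`. -/
noncomputable def key (n : ℕ) (hn : 0 < n) (x0 : Fin n → V) (ρ : V → V) (c : ℕ → V) (t : ℕ) :
    V × ℕ × V :=
  let v := (seq n hn x0 ρ c t).1 (active n hn t)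
  (v, exits n hn x0 ρ c t v, (seq n hn x0 ρ c t).2 v)

/-- Replace the entries of `ω` at the vertices of `F` by those of `ω'`. -/
noncomputable def resample (F : Finset V) (ω' ω : V × ℕ × V → V) : V × ℕ × V → V :=
  fun i => if i.1 ∈ F then ω' i else ω i

lemma instr_resample (ρ : V → V) (F : Finset V) (ω' ω : V × ℕ × V → V) :
    instr ρ (resample F ω' ω) = F.piecewise (instr ρ ω') (instr ρ ω) := by
  funext v k
  by_cases hv : v ∈ F
  · rw [Finset.piecewise_eq_of_mem _ _ _ hv]
    have : ∀ k, rot ρ (resample F ω' ω) v k = rot ρ ω' v k := by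
      intro k
      induction k with
      | zero => rfl
      | succ k ih => simp [rot, ih, resample, hv]
    exact this _
  · rw [Finset.piecewise_eq_of_notMem _ _ _ hv]
    have : ∀ k, rot ρ (resample F ω' ω) v k = rot ρ ω v k := by
      intro k
      induction k with
      | zero => rfl
      | succ k ih => simp [rot, ih, resample, hv]
    exact this _

section law

variable {n : ℕ} {hn : 0 < n} {x0 : Fin n → V} {ρ : V → V}

lemma exits_mono (c : ℕ → V) (v : V) : Monotone fun t => exits n hn x0 ρ c t v := by
  refine monotone_nat_of_le_succ fun t => ?_
  simp only [exits, Function.update_apply]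
  split_ifs with h
  · subst h; omega
  · exact le_rfl

/-- No field entry is read twice, because the exit count of a vertex grows each time it is left.
This is why independent entries give the product formula of `IsLaw`. -/
lemma key_injective (c : ℕ → V) : Function.Injective (key n hn x0 ρ c) := by
  have hlt : ∀ s t, s < t → key n hn x0 ρ c s ≠ key n hn x0 ρ c t := by
    intro s t hst h
    simp only [key, Prod.mk.injEq] at h
    obtain ⟨h1, h2, -⟩ := h
    have h3 := exits_mono (n := n) (hn := hn) (x0 := x0) (ρ := ρ) c
      ((seq n hn x0 ρ c s).1 (active n hn s)) (show s + 1 ≤ t from hst)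
    simp only [exits, Function.update_self] at h3
    rw [← h1] at h2
    omega
  intro s t h
  rcases lt_trichotomy s t with hst | hst | hst
  · exact absurd h (hlt _ _ hst)
  · exact hst
  · exact absurd h.symm (hlt _ _ hst)

lemma seq_congr {y c : ℕ → V} {t : ℕ} (h : ∀ s < t, y s = c s) :
    seq n hn x0 ρ y t = seq n hn x0 ρ c t ∧ exits n hn x0 ρ y t = exits n hn x0 ρ c t := by
  induction t with
  | zero => exact ⟨rfl, rfl⟩
  | succ t ih =>
    obtain ⟨h1, h2⟩ := ih fun s hs => h s (by omega)
    simp only [seq, exits, h1, h2, h t (by omega), and_self]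

lemma seq_traj (ω : V × ℕ × V → V) (t : ℕ) :
    seq n hn x0 ρ (traj n hn x0 (instr ρ ω)) t =
      ((walk n hn x0 (instr ρ ω) t).1,
        fun v => rot ρ ω v ((walk n hn x0 (instr ρ ω) t).2 v)) ∧
    exits n hn x0 ρ (traj n hn x0 (instr ρ ω)) t = (walk n hn x0 (instr ρ ω) t).2 := by
  induction t with
  | zero => exact ⟨rfl, rfl⟩
  | succ t ih =>
    obtain ⟨h1, h2⟩ := ih
    constructor
    · rw [seq, h1, apply', pos_succ, odo_succ]
      refine Prod.ext rfl (funext fun v => ?_)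
      simp only [Function.update_apply, src]
      split_ifs with hv
      · subst hv; rfl
      · rfl
    · rw [exits, h1, h2, odo_succ]; rfl

lemma traj_eq (ω : V × ℕ × V → V) (t : ℕ) :
    traj n hn x0 (instr ρ ω) t = ω (key n hn x0 ρ (traj n hn x0 (instr ρ ω)) t) := by
  obtain ⟨h1, h2⟩ := seq_traj (n := n) (hn := hn) (x0 := x0) (ρ := ρ) ω t
  simp only [key, h1, h2]
  rfl

/-- Prefix cylinders of the trajectory are boxes in the field, with indices depending only on the
prefix. -/
lemma traj_prefix_iff (ω : V × ℕ × V → V) (c : ℕ → V) (t : ℕ) :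
    (∀ s < t, traj n hn x0 (instr ρ ω) s = c s) ↔ ∀ s < t, ω (key n hn x0 ρ c s) = c s := by
  induction t with
  | zero => simp
  | succ t ih =>
    simp only [Nat.forall_lt_succ_right, ← ih]
    refine and_congr_right fun h => ?_
    obtain ⟨h1, h2⟩ := seq_congr (n := n) (hn := hn) (x0 := x0) (ρ := ρ) h
    rw [traj_eq]
    simp only [key, h1, h2]

lemma recurrent_traj_iff (ω : V × ℕ × V → V) :
    Recurrent n hn x0 ρ (traj n hn x0 (instr ρ ω)) ↔ StackRec n hn x0 (instr ρ ω) := by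
  simp only [Recurrent, StackRec, seq_traj]

variable [MeasurableSpace V] [DiscreteMeasurableSpace V]

lemma measurableSet_recurrent [Countable V] : MeasurableSet {y | Recurrent n hn x0 ρ y} := by
  have hpos : ∀ t i, Measurable fun y : ℕ → V => (seq n hn x0 ρ y t).1 i := by
    intro t
    induction t with
    | zero => intro i; exact measurable_const
    | succ t ih =>
      intro i
      simp only [seq, apply', Function.update_apply]
      split_ifs
      · exact measurable_pi_apply t
      · exact ih i
  have : {y | Recurrent n hn x0 ρ y} = ⋂ v, ⋂ N : ℕ, ⋃ t : ℕ, ⋃ (_ : N < t), ⋃ i,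
      {y | (seq n hn x0 ρ y t).1 i = v} := by
    ext y
    simp only [Recurrent, Set.infinite_iff_exists_gt, Set.mem_ofPred_eq, Set.mem_iInter,
      Set.mem_iUnion, exists_prop]
    exact forall₂_congr fun v N => exists_congr fun t => and_comm
  rw [this]
  exact .iInter fun v => .iInter fun N => .iUnion fun t => .iUnion fun _ => .iUnion fun i =>
    hpos t i (measurableSet_singleton v)

lemma measurable_traj [Countable V] :
    Measurable fun ω : V × ℕ × V → V => traj n hn x0 (instr ρ ω) := by
  refine measurable_pi_iff.2 fun t => measurable_to_countable' fun a => ?_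
  have hset : (fun ω : V × ℕ × V → V => traj n hn x0 (instr ρ ω) t) ⁻¹' {a} =
      ⋃ c : Fin (t + 1) → V, ⋃ (_ : c (Fin.last t) = a), ⋂ s : ℕ, ⋂ (_ : s < t + 1),
        {ω | ω (key n hn x0 ρ (fun s => if h : s < t + 1 then c ⟨s, h⟩ else a) s) =
          if h : s < t + 1 then c ⟨s, h⟩ else a} := by
    ext ω
    simp only [Set.mem_preimage, Set.mem_singleton_iff, Set.mem_iUnion, Set.mem_iInter,
      Set.mem_ofPred_eq, exists_prop]
    simp only [← traj_prefix_iff]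
    constructor
    · intro h
      refine ⟨fun s => traj n hn x0 (instr ρ ω) s, by simpa using h, fun s hs => by simp [hs]⟩
    · rintro ⟨c, hc, h⟩
      have := h t (by omega)
      rw [dif_pos (by omega)] at this
      rw [this, ← hc]; rfl
  rw [hset]
  refine .iUnion fun c => .iUnion fun _ => .iInter fun s => .iInter fun _ => ?_
  exact measurable_pi_apply _ (measurableSet_singleton _)

/-- `IsLaw` determines the measure: the prefix cylinders form a π-system generating the product
σ-algebra on `ℕ → V`, as `V` is countable. -/
lemma isLaw_unique [Countable V] {mech : V → V → V → ℝ≥0∞} {μ ν : Measure (ℕ → V)}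
    [IsProbabilityMeasure μ] [IsProbabilityMeasure ν]
    (hμ : IsLaw mech n hn x0 ρ μ) (hν : IsLaw mech n hn x0 ρ ν) : μ = ν := by
  have : Nonempty V := ⟨x0 ⟨0, hn⟩⟩
  refine ext_of_generate_finite
    {S | ∃ (t : ℕ) (c : ℕ → V), S = {y : ℕ → V | ∀ s < t, y s = c s}} ?_ ?_ ?_ (by simp)
  · apply le_antisymm
    · refine iSup_le fun t => ?_
      rintro _ ⟨A, -, rfl⟩
      have hset : (fun y : ℕ → V => y t) ⁻¹' A = ⋃ c : Fin (t + 1) → V,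
          ⋃ (_ : c (Fin.last t) ∈ A), {y : ℕ → V | ∀ s < t + 1,
            y s = if h : s < t + 1 then c ⟨s, h⟩ else Classical.arbitrary V} := by
        ext y
        simp only [Set.mem_preimage, Set.mem_iUnion, Set.mem_ofPred_eq, exists_prop]
        constructor
        · intro h
          exact ⟨fun s => y s, by simpa using h, fun s hs => by simp [hs]⟩
        · rintro ⟨c, hc, h⟩
          have := h t (by omega)
          rw [dif_pos (by omega)] at this
          rw [this]; exact hc
      rw [hset]
      refine MeasurableSet.iUnion fun c => MeasurableSet.iUnion fun _ => ?_
      exact MeasurableSpace.measurableSet_generateFrom ⟨_, _, rfl⟩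
    · refine MeasurableSpace.generateFrom_le ?_
      rintro _ ⟨t, c, rfl⟩
      have : {y : ℕ → V | ∀ s < t, y s = c s} = ⋂ s : ℕ, ⋂ (_ : s < t), {y | y s = c s} := by
        ext; simp
      rw [this]
      exact .iInter fun s => .iInter fun _ => measurable_pi_apply s (measurableSet_singleton _)
  · rintro _ ⟨t, c, rfl⟩ _ ⟨t', c', rfl⟩ ⟨z, hz, hz'⟩
    refine ⟨max t t', z, ?_⟩
    ext y
    simp only [Set.mem_inter_iff, Set.mem_ofPred_eq, lt_max_iff] at hz hz' ⊢
    constructor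
    · rintro ⟨h, h'⟩ s (hs | hs)
      · rw [h s hs, hz s hs]
      · rw [h' s hs, hz' s hs]
    · intro h
      exact ⟨fun s hs => (h s (.inl hs)).trans (hz s hs),
        fun s hs => (h s (.inr hs)).trans (hz' s hs)⟩
  · rintro _ ⟨t, c, rfl⟩
    rw [hμ, hν]

end law

/-! ### Almost sure properties of the instruction field -/

section field

/-- Positive-probability moves `φ` of the local chain at `x` that lead every neighbor to `b`,
decreasing the distance `d` to `b`, measured in steps of the chain. The fixed choice `φ` turns
reaching `b` into a box event, uniformly in the starting rotor. -/
lemma exists_strategy {G : SimpleGraph V} {mech : V → V → V → ℝ≥0∞}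
    (hmech : IsMechanism G mech) {x b : V} (hb : G.Adj x b) :
    ∃ (φ : V → V) (d : V → ℕ), (∀ a, mech x a (φ a) ≠ 0) ∧
      ∀ a, G.Adj x a → a ≠ b → d (φ a) < d a := by
  have hex : ∀ a, ∃ c, mech x a c ≠ 0 := by
    intro a
    by_contra! h
    have := hmech.total x a
    simp [h] at this
  set d : V → ℕ := fun a => sInf {m | 0 < mechPow mech x m a b} with hd
  have hstep : ∀ a, ∃ c, mech x a c ≠ 0 ∧ (G.Adj x a → a ≠ b → d c < d a) := by
    intro a
    by_cases ha : G.Adj x a ∧ a ≠ b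
    · obtain ⟨ha, hab⟩ := ha
      have hm : 0 < mechPow mech x (d a) a b := Nat.sInf_mem (hmech.irreducible x a b ha hb)
      cases hda : d a with
      | zero => rw [hda] at hm; simp [mechPow, hab] at hm
      | succ m =>
        rw [hda] at hm
        simp only [mechPow] at hm
        obtain ⟨c, hc⟩ : ∃ c, mech x a c * mechPow mech x m c b ≠ 0 := by
          by_contra! h
          simp [h] at hm
        refine ⟨c, left_ne_zero_of_mul hc, fun _ _ => ?_⟩
        have : d c ≤ m := Nat.sInf_le (pos_iff_ne_zero.2 (right_ne_zero_of_mul hc))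
        omega
    · obtain ⟨c, hc⟩ := hex a
      exact ⟨c, hc, fun h1 h2 => absurd ⟨h1, h2⟩ ha⟩
  choose φ hφ using hstep
  exact ⟨φ, d, fun a => (hφ a).1, fun a => (hφ a).2⟩

variable [MeasurableSpace V] [DiscreteMeasurableSpace V]
variable {G : SimpleGraph V} {mech : V → V → V → ℝ≥0∞}

/-- The transition row `p_x(a, ·)` as a probability mass function. -/
noncomputable def row (hmech : IsMechanism G mech) (x a : V) : PMF V :=
  ⟨mech x a, hmech.total x a ▸ ENNReal.summable.hasSum⟩

/-- The law of a field of independent entries, the one at `(x, k, a)` having law `p_x(a, ·)`. -/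
noncomputable def field (hmech : IsMechanism G mech) : Measure (V × ℕ × V → V) :=
  Measure.infinitePi fun i => (row hmech i.1 i.2.2).toMeasure

instance (hmech : IsMechanism G mech) : IsProbabilityMeasure (field hmech) := by
  unfold field; infer_instance

lemma field_box (hmech : IsMechanism G mech) (S : Finset (V × ℕ × V)) (g : V × ℕ × V → V) :
    field hmech {ω | ∀ i ∈ S, ω i = g i} = ∏ i ∈ S, mech i.1 i.2.2 (g i) := by
  have : {ω : V × ℕ × V → V | ∀ i ∈ S, ω i = g i} = Set.pi S fun i => {g i} := by
    ext; simp [Set.mem_pi]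
  rw [this, field, Measure.infinitePi_pi _ fun i _ => measurableSet_singleton _]
  refine Finset.prod_congr rfl fun i _ => ?_
  rw [PMF.toMeasure_apply_singleton _ _ (measurableSet_singleton _)]
  rfl

lemma isLaw_map [Countable V] (hmech : IsMechanism G mech) (n : ℕ) (hn : 0 < n) (x0 : Fin n → V)
    (ρ : V → V) :
    IsLaw mech n hn x0 ρ ((field hmech).map fun ω => traj n hn x0 (instr ρ ω)) := by
  intro t c
  have hinj := key_injective (n := n) (hn := hn) (x0 := x0) (ρ := ρ) c
  rw [Measure.map_apply measurable_traj]
  · have : (fun ω => traj n hn x0 (instr ρ ω)) ⁻¹' {y : ℕ → V | ∀ s < t, y s = c s} =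
        {ω | ∀ i ∈ (Finset.range t).image (key n hn x0 ρ c),
          ω i = c (Function.invFun (key n hn x0 ρ c) i)} := by
      ext ω
      simp [traj_prefix_iff, Function.leftInverse_invFun hinj _]
    rw [this, field_box, Finset.prod_image fun _ _ _ _ h => hinj h]
    refine Finset.prod_congr rfl fun s _ => ?_
    rw [Function.leftInverse_invFun hinj]
    rfl
  · have : {y : ℕ → V | ∀ s < t, y s = c s} = ⋂ s : ℕ, ⋂ (_ : s < t), {y | y s = c s} := by
      ext; simp
    rw [this]
    exact .iInter fun s => .iInter fun _ => measurable_pi_apply s (measurableSet_singleton _)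

lemma ae_adj [Countable V] (hmech : IsMechanism G mech) :
    ∀ᵐ ω ∂(field hmech), ∀ i, G.Adj i.1 (ω i) := by
  rw [ae_all_iff]
  intro i
  have hmp := measurePreserving_eval_infinitePi
    (fun i : V × ℕ × V => (row hmech i.1 i.2.2).toMeasure) i
  refine hmp.quasiMeasurePreserving.ae (p := fun b => G.Adj i.1 b) ?_
  rw [ae_iff, PMF.toMeasure_apply_eq_zero_iff _ (MeasurableSet.of_discrete)]
  rw [Set.disjoint_left]
  intro b hb hb'
  exact hb' (hmech.support i.1 i.2.2 b hb)

/-- Each rotor sequence uses each neighbor infinitely often. In disjoint blocks of exits of fixed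
length `M`, the events `E j` that all entries follow the strategy `φ` are independent and equally
likely, so by Borel–Cantelli infinitely many occur, and each of them forces a use of `b`. -/
lemma ae_hit [Countable V] (hmech : IsMechanism G mech) {N : V → Finset V}
    (hN : ∀ v y, y ∈ N v ↔ G.Adj v y) {ρ : V → V} (hρ : IsRotor G ρ) {x b : V}
    (hb : G.Adj x b) : ∀ᵐ ω ∂(field hmech), ∀ K, ∃ k ≥ K, instr ρ ω x k = b := by
  obtain ⟨φ, d, hφ, hd⟩ := exists_strategy hmech hb
  set M := (N x).sup d + 1 with hM
  set S : ℕ → Finset (V × ℕ × V) := fun j =>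
    {x} ×ˢ (Finset.Ico (j * M) ((j + 1) * M) ×ˢ N x) with hS
  set E : ℕ → Set (V × ℕ × V → V) := fun j => {ω | ∀ i ∈ S j, ω i = φ i.2.2} with hE
  have hdisj : ∀ j j', j ≠ j' → Disjoint (S j) (S j') := by
    have : ∀ j j', j < j' → Disjoint (S j) (S j') := by
      intro j j' hlt
      rw [Finset.disjoint_left]
      rintro ⟨y, k, a⟩ h h'
      simp only [hS, Finset.mem_product, Finset.mem_Ico] at h h'
      have : (j + 1) * M ≤ j' * M := Nat.mul_le_mul_right _ hlt
      omega
    intro j j' hne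
    rcases lt_or_gt_of_ne hne with h | h
    · exact this _ _ h
    · exact (this _ _ h).symm
  have hmeas : ∀ j, MeasurableSet (E j) := by
    intro j
    have : E j = ⋂ i ∈ S j, {ω | ω i = φ i.2.2} := by ext; simp [hE]
    rw [this]
    exact Finset.measurableSet_biInter _ fun i _ =>
      measurable_pi_apply i (measurableSet_singleton _)
  have hindep : iIndepSet E (field hmech) := by
    rw [iIndepSet_iff_meas_biInter hmeas]
    intro s
    have : ⋂ j ∈ s, E j = {ω | ∀ i ∈ s.biUnion S, ω i = φ i.2.2} := by
      ext ω
      simp only [hE, Set.mem_iInter, Set.mem_ofPred_eq, Finset.mem_biUnion]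
      exact ⟨fun h i ⟨j, hj, hi⟩ => h j hj i hi, fun h j hj i hi => h i ⟨j, hj, hi⟩⟩
    rw [this, field_box _ _ fun i => φ i.2.2,
      Finset.prod_biUnion fun j _ j' _ hne => hdisj j j' hne]
    exact Finset.prod_congr rfl fun j _ => (field_box _ _ _).symm
  have hprob : ∀ j, field hmech (E j) = (∏ a ∈ N x, mech x a (φ a)) ^ M := by
    intro j
    simp only [hE]
    rw [field_box _ _ fun i => φ i.2.2]
    simp only [hS]
    rw [Finset.prod_product, Finset.prod_singleton, Finset.prod_product]
    simp only [Finset.prod_const, Nat.card_Ico]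
    congr 1
    rw [add_mul, one_mul]; omega
  have hlim := measure_limsup_eq_one hmeas hindep (by
    simp only [hprob]
    exact ENNReal.tsum_const_eq_top_of_ne_zero
      (pow_ne_zero _ (Finset.prod_ne_zero_iff.2 fun a _ => hφ a)))
  have hlim' : ∀ᵐ ω ∂(field hmech), ω ∈ limsup E atTop := by
    rw [← prob_compl_eq_zero_iff (MeasurableSet.measurableSet_limsup hmeas)] at hlim
    exact hlim
  filter_upwards [hlim', ae_adj hmech] with ω hω hadj K
  have hrot : ∀ k, G.Adj x (rot ρ ω x k) := by
    intro k
    cases k with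
    | zero => exact hρ x
    | succ k => exact hadj (x, k, _)
  rw [mem_limsup_iff_frequently_mem, frequently_atTop] at hω
  obtain ⟨j, hj, hjE⟩ := hω (K + 1)
  have hdesc : ∀ m k, d (rot ρ ω x k) ≤ m → j * M ≤ k → k + m < (j + 1) * M →
      ∃ k' ≥ k, rot ρ ω x k' = b := by
    intro m
    induction m with
    | zero =>
      intro k hk h1 h2
      refine ⟨k, le_rfl, ?_⟩
      by_contra hne
      have := hd _ (hrot k) hne
      omega
    | succ m ih =>
      intro k hk h1 h2
      by_cases hne : rot ρ ω x k = b
      · exact ⟨k, le_rfl, hne⟩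
      · have h3 := hd _ (hrot k) hne
        have h4 : rot ρ ω x (k + 1) = φ (rot ρ ω x k) := by
          refine hjE (x, k, rot ρ ω x k) ?_
          simp only [hS, Finset.mem_product, Finset.mem_singleton, Finset.mem_Ico, true_and, hN]
          exact ⟨⟨h1, by omega⟩, hrot k⟩
        obtain ⟨k', hk', h5⟩ := ih (k + 1) (by rw [h4]; omega) (by omega) (by omega)
        exact ⟨k', by omega, h5⟩
  obtain ⟨k', hk', h⟩ := hdesc ((N x).sup d) (j * M)
    (Finset.le_sup ((hN _ _).2 (hrot _))) le_rfl (by rw [add_mul, one_mul]; omega)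
  have h1 : j * 1 ≤ j * M := Nat.mul_le_mul_left _ (by omega)
  refine ⟨k' - 1, by omega, ?_⟩
  rw [instr, Nat.sub_add_cancel (by omega), h]

lemma ae_good [Countable V] (hmech : IsMechanism G mech) {N : V → Finset V}
    (hN : ∀ v y, y ∈ N v ↔ G.Adj v y) {ρ : V → V} (hρ : IsRotor G ρ) :
    ∀ᵐ ω ∂(field hmech), ∀ v, GoodAt G v (instr ρ ω v) := by
  have h : ∀ᵐ ω ∂(field hmech), ∀ x b, G.Adj x b → ∀ K, ∃ k ≥ K, instr ρ ω x k = b := by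
    simp only [ae_all_iff]
    intro x b hb
    exact ae_all_iff.1 (ae_hit hmech hN hρ hb)
  filter_upwards [h, ae_adj hmech] with ω hω hadj v
  exact ⟨fun k => hadj (v, k, _), hω v⟩

/-! ### The zero-one law -/

/-- Up to null sets, recurrence does not depend on the entries at any finite set of vertices, so
it is independent of all of them, hence of itself. -/
theorem field_zero_one [Countable V] (hG : G.Connected) (hmech : IsMechanism G mech)
    {N : V → Finset V} (hN : ∀ v y, y ∈ N v ↔ G.Adj v y) (n : ℕ) (hn : 0 < n) (x0 : Fin n → V)
    {ρ : V → V} (hρ : IsRotor G ρ) :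
    field hmech {ω | StackRec n hn x0 (instr ρ ω)} = 0 ∨
      field hmech {ω | StackRec n hn x0 (instr ρ ω)} = 1 := by
  set P := field hmech with hP
  set A := {ω | StackRec n hn x0 (instr ρ ω)} with hA
  have hAm : MeasurableSet A := by
    have : A = (fun ω => traj n hn x0 (instr ρ ω)) ⁻¹' {y | Recurrent n hn x0 ρ y} := by
      ext ω; exact (recurrent_traj_iff ω).symm
    rw [this]
    exact measurable_traj measurableSet_recurrent
  have hgood := ae_good hmech hN hρ
  obtain ⟨ω', hω'⟩ := hgood.exists
  set m : V × ℕ × V → MeasurableSpace (V × ℕ × V → V) := fun i =>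
    MeasurableSpace.comap (fun ω => ω i) inferInstance with hm
  have hmle : ∀ i, m i ≤ MeasurableSpace.pi := fun i => (measurable_pi_apply i).comap_le
  have hind : iIndep m P :=
    iIndepFun_infinitePi (P := fun i : V × ℕ × V => (row hmech i.1 i.2.2).toMeasure)
      (X := fun _ b => b) (fun _ => measurable_id)
  have hF : ∀ F : Finset V, Indep (⨆ i ∈ {i : V × ℕ × V | i.1 ∈ F}, m i)
      (MeasurableSpace.generateFrom {A}) P := by
    intro F
    have hdisj := indep_iSup_of_disjoint hmle hind
      (S := {i : V × ℕ × V | i.1 ∈ F}) (T := {i : V × ℕ × V | i.1 ∉ F})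
      (Set.disjoint_left.2 fun i h h' => h' h)
    set mT := ⨆ i ∈ {i : V × ℕ × V | i.1 ∉ F}, m i with hmT
    have hres : @Measurable _ _ mT MeasurableSpace.pi (resample F ω') := by
      refine @measurable_pi_iff _ _ _ mT _ _ |>.2 fun i => ?_
      unfold resample
      split_ifs with hi
      · exact @measurable_const _ _ _ mT _
      · exact Measurable.of_comap_le (le_iSup₂ (f := fun i (_ : i ∈ {i : V × ℕ × V | i.1 ∉ F}) => m i) i hi)
    have hB : MeasurableSet[mT] (resample F ω' ⁻¹' A) := hres hAm
    have hAB : A =ᵐ[P] (resample F ω' ⁻¹' A : Set _) := by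
      filter_upwards [hgood] with ω hω
      refine propext ?_
      change StackRec n hn x0 (instr ρ ω) ↔ StackRec n hn x0 (instr ρ (resample F ω' ω))
      rw [instr_resample]
      exact (stackRec_piecewise hG hN hω hω' F).symm
    refine IndepSets.indep (p1 := {s | MeasurableSet[⨆ i ∈ {i : V × ℕ × V | i.1 ∈ F}, m i] s})
      (p2 := {A}) (iSup₂_le fun i _ => hmle i)
      (MeasurableSpace.generateFrom_le (by rintro _ rfl; exact hAm))
      (@MeasurableSpace.isPiSystem_measurableSet _ (_)) (IsPiSystem.singleton A)
      (@MeasurableSpace.generateFrom_measurableSet _ (_)).symm rfl ?_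
    rw [IndepSets_iff]
    rintro s _ hs rfl
    have h1 : (s ∩ A : Set _) =ᵐ[P] (s ∩ resample F ω' ⁻¹' A : Set _) :=
      (ae_eq_refl s).inter hAB
    rw [measure_congr h1, measure_congr hAB]
    exact (Indep_iff _ _ _).1 hdisj s _ hs hB
  have htot := indep_iSup_of_directed_le hF (fun F => iSup₂_le fun i _ => hmle i)
    (MeasurableSpace.generateFrom_le (by rintro _ rfl; exact hAm))
    (fun F F' => ⟨F ∪ F',
      iSup₂_le fun i hi => le_iSup₂_of_le i (Finset.mem_union_left _ hi) le_rfl,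
      iSup₂_le fun i hi => le_iSup₂_of_le i (Finset.mem_union_right _ hi) le_rfl⟩)
  have hle : MeasurableSpace.pi ≤ ⨆ F : Finset V, ⨆ i ∈ {i : V × ℕ × V | i.1 ∈ F}, m i :=
    iSup_le fun i => le_iSup_of_le {i.1} (le_iSup₂_of_le i (Finset.mem_singleton_self i.1) le_rfl)
  refine measure_eq_zero_or_one_of_indepSet_self ?_
  refine (indepSet_iff_measure_inter_eq_mul hAm hAm P).2 ?_
  exact (Indep_iff _ _ _).1 htot A A (hle _ hAm)
    (MeasurableSpace.measurableSet_generateFrom rfl)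

end field

lemma countable_of_connected {G : SimpleGraph V} (hG : G.Connected) {N : V → Finset V}
    (hN : ∀ v y, y ∈ N v ↔ G.Adj v y) (x : V) : Countable V := by
  set S : ℕ → Finset V := fun k => Nat.rec {x} (fun _ s => s ∪ s.biUnion N) k with hS
  have hall : ∀ v, ∃ k, v ∈ S k := by
    intro v
    obtain ⟨p⟩ := hG.preconnected v x
    induction p with
    | nil => exact ⟨0, Finset.mem_singleton_self _⟩
    | cons hadj _ ih =>
      obtain ⟨k, hk⟩ := ih ‹_›
      exact ⟨k + 1, Finset.mem_union_right _
        (Finset.mem_biUnion.2 ⟨_, hk, (hN _ _).2 hadj.symm⟩)⟩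
  have : (⋃ k, (S k : Set V)) = Set.univ := by
    ext v; simpa using hall v
  rw [← Set.countable_univ_iff, ← this]
  exact Set.countable_iUnion fun k => (S k).countable_toSet

end RWLM

/-- **Proposition (zero-one law for recurrence of RWLMs).**
For the `n`-walker random walk with local memory on `G` with any initial rotor
configuration `ρ`, the recurrence probability satisfies `p_rec(ρ) ∈ {0, 1}`. -/
theorem rwlm_recurrence_prob_zero_or_one
    {V : Type*} [MeasurableSpace V] [DiscreteMeasurableSpace V]
    (G : SimpleGraph V) (hG : G.Connected) (hGlf : G.LocallyFinite)
    (mech : V → V → V → ℝ≥0∞) (hmech : RWLM.IsMechanism G mech)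
    (n : ℕ) (hn : 0 < n) (x0 : Fin n → V)
    (ρ : V → V) (hρ : RWLM.IsRotor G ρ)
    (μ : MeasureTheory.Measure (ℕ → V)) [MeasureTheory.IsProbabilityMeasure μ]
    (hμ : RWLM.IsLaw mech n hn x0 ρ μ) :
    μ {y | RWLM.Recurrent n hn x0 ρ y} = 0 ∨ μ {y | RWLM.Recurrent n hn x0 ρ y} = 1 := by
  have hN : ∀ v y, y ∈ (@SimpleGraph.neighborFinset V G v (hGlf v)) ↔ G.Adj v y := fun v y =>
    @SimpleGraph.mem_neighborFinset V G v (hGlf v) y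
  have hcount := RWLM.countable_of_connected hG hN (x0 ⟨0, hn⟩)
  have hprob : IsProbabilityMeasure ((RWLM.field hmech).map fun ω =>
      RWLM.traj n hn x0 (RWLM.instr ρ ω)) :=
    Measure.isProbabilityMeasure_map RWLM.measurable_traj.aemeasurable
  rw [RWLM.isLaw_unique hμ (RWLM.isLaw_map hmech n hn x0 ρ),
    Measure.map_apply RWLM.measurable_traj RWLM.measurableSet_recurrent]
  have hset : (fun ω => RWLM.traj n hn x0 (RWLM.instr ρ ω)) ⁻¹'
      {y | RWLM.Recurrent n hn x0 ρ y} = {ω | RWLM.StackRec n hn x0 (RWLM.instr ρ ω)} := by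
    ext ω; exact RWLM.recurrent_traj_iff ω
  rw [hset]
  exact RWLM.field_zero_one hG hmech hN n hn x0 hρ
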